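/- Let Ω ⊂ ℝⁿ be a bounded domain with the normalization B̄(x0,1) ⊆ Ω and d̂(x0) ≥ 15, let μ0 be a nontrivial finite positive Radon measure on Ω with d_Ω̂ ∈ L¹(μ0), and let (γ_y)_{y∈Ω̂} be a path system. Then ∫_Ω ω(x) d̂(x)^{−n+1} dx < +∞, where ω(x) := μ0({y ∈ Ω : ∃ t ∈ [0,1] with |γ_y(t) − x| ≤ d̂(x)/2}) and the integral is with respect to Lebesgue measure. -/

import Mathlib

open MeasureTheory Metric Set
open scoped RealInnerProductSpace ENNReal NNReal

noncomputable section

/-- `ℝⁿ` as a Euclidean space. -/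
abbrev En (n : ℕ) := EuclideanSpace ℝ (Fin n)

/-- The geodesic distance, within the set `U`, from the point `x` to the base point `x0`:
the infimum of the lengths (total variations) of rectifiable curves joining `x` to `x0`
inside `U` (non-rectifiable curves have infinite length, so they do not affect the
infimum). -/
def geoDist {X : Type*} [PseudoEMetricSpace X] (U : Set X) (x0 x : X) : ℝ≥0∞ :=
  ⨅ (γ : ℝ → X) (_ : ContinuousOn γ (Set.Icc 0 1)) (_ : Set.MapsTo γ (Set.Icc 0 1) U)
    (_ : γ 0 = x) (_ : γ 1 = x0), eVariationOn γ (Set.Icc 0 1)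

/-- The open measurable cover `Ω̂` associated with a measurable cover `Ω̃`:
`Ω̂ = {x ∈ Ω̃ : dist(x, ℝⁿ \ Ω̃) > 0}`. -/
def hatSet {n : ℕ} (Ot : Set (En n)) : Set (En n) :=
  {x ∈ Ot | 0 < Metric.infDist x Otᶜ}

/-- A Bogovskii path system on `Ω̂ = U`: a measurable family of rectifiable curves
`γ_y` joining each `y ∈ U` to the base point `x0` inside `U`, with Ahlfors-type
length bounds and uniform interiority. -/
structure PathSystem {n : ℕ} (Ω U : Set (En n)) (x0 : En n) : Type where
  γ : En n → ℝ → En n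
  contOn : ∀ y ∈ U, ContinuousOn (γ y) (Set.Icc 0 1)
  mapsTo : ∀ y ∈ U, ∀ t ∈ Set.Icc (0:ℝ) 1, γ y t ∈ U
  start : ∀ y ∈ U, γ y 0 = y
  ends : ∀ y ∈ U, γ y 1 = x0
  rectifiable : ∀ y ∈ U, eVariationOn (γ y) (Set.Icc 0 1) < ⊤
  meas : Measurable fun q : ℝ × En n => γ q.2 q.1
  C : ℝ
  Cpos : 0 < C
  ball_len : ∀ x ∈ Ω, ∀ y ∈ Ω, ∀ r : ℝ, r ≤ Metric.infDist x Uᶜ / 2 →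
    eVariationOn (γ y) {t ∈ Set.Icc (0:ℝ) 1 | γ y t ∈ Metric.ball x r} ≤
      ENNReal.ofReal (C * r)
  total_len : ∀ y ∈ U, eVariationOn (γ y) (Set.Icc 0 1) ≤
      ENNReal.ofReal C * geoDist U x0 y
  unif : ∃ ε0 : ℝ, 0 < ε0 ∧ ∀ ε : ℝ, 0 < ε → ε < ε0 → ∃ δ : ℝ, 0 < δ ∧
      ∀ y ∈ U, ε < Metric.infDist y Uᶜ →
        ∀ t ∈ Set.Icc (0:ℝ) 1, δ < Metric.infDist (γ y t) Uᶜ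

/-- The localized Riesz potential `I₁μ0(x) = ∫_Ω |x − y|^{1−n} dμ0(y)` (with value `∞`
allowed). -/
def I1 {n : ℕ} (μ0 : MeasureTheory.Measure (En n)) (Ω : Set (En n)) (x : En n) : ℝ≥0∞ :=
  ∫⁻ y in Ω, (edist x y) ^ ((1:ℝ) - n) ∂μ0

/-- `ω(x) = μ0({y ∈ Ω : ∃ t ∈ [0,1], |γ_y(t) − x| ≤ d̂(x)/2})`. -/
def omegaFn {n : ℕ} (μ0 : MeasureTheory.Measure (En n)) (Ω U : Set (En n))
    (γ : En n → ℝ → En n) (x : En n) : ℝ≥0∞ :=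
  μ0 {y ∈ Ω | ∃ t ∈ Set.Icc (0:ℝ) 1, dist (γ y t) x ≤ Metric.infDist x Uᶜ / 2}

/-- The weight `w0(x) = I₁μ0(x) + ω(x) d̂(x)^{1−n}`. -/
def wZero {n : ℕ} (μ0 : MeasureTheory.Measure (En n)) (Ω U : Set (En n))
    (γ : En n → ℝ → En n) (x : En n) : ℝ≥0∞ :=
  I1 μ0 Ω x + omegaFn μ0 Ω U γ x * (ENNReal.ofReal (Metric.infDist x Uᶜ)) ^ ((1:ℝ) - n)

/-!
Say that a curve sees `x` if it meets the ball of radius `κ d(x)` around `x`, where `d` is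
`1`-Lipschitz and `κ < 1`. Everything seen from the ball `B(z, d(z)/2)` lies within distance
`≲ d(z)` of `z` and has `d ≈ d(z)`, so the integral of `d ^ (1 - n)` over it is `≲ d(z)`. Cut a
rectifiable curve `g` greedily, each piece ending when it first leaves such a ball around its
starting point: every piece but the last has length at least `d/2` at its starting point, and on
the last one `d` is at most its value at the endpoint of `g` plus the length. Hence `d ^ (1 - n)`
integrates over everything seen by `g` to `≲ length g + d(endpoint)`. With `d = d̂`, Tonelli's
theorem turns `∫ ω d̂ ^ (1 - n)` into the `μ0`-integral of this bound over the curves `γ_y`,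
whose lengths are dominated by the geodesic distance.
-/

section DistTube

variable {X : Type*} [PseudoMetricSpace X] {d : X → ℝ} {κ : ℝ} {S T : Set X}

/-- The points `x` seen from `S` at scale `d`: those for which the ball of radius `κ * d x` around
`x` meets `S`. The ball is open, so that a dense subset of a curve sees as much as the curve. -/
def distTube (d : X → ℝ) (κ : ℝ) (S : Set X) : Set X :=
  {x | ∃ p ∈ S, dist p x < κ * d x}

lemma distTube_mono (h : S ⊆ T) : distTube d κ S ⊆ distTube d κ T :=
  fun _ ⟨p, hp, hpx⟩ => ⟨p, h hp, hpx⟩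

lemma distTube_union : distTube d κ (S ∪ T) = distTube d κ S ∪ distTube d κ T := by
  ext x
  simp only [distTube, mem_union, mem_ofPred_eq, or_and_right, exists_or]

lemma quarter_le_of_mem_distTube_closedBall (hd : LipschitzWith 1 d) (hκ₀ : 0 ≤ κ) (hκ₁ : κ < 1)
    {x z : X} (hx : x ∈ distTube d κ (closedBall z (d z / 2))) : 1 / 4 * d z ≤ d x := by
  obtain ⟨p, hpz, hpx⟩ := hx
  rw [mem_closedBall'] at hpz
  have hzp : d z ≤ d p + dist z p := by simpa using hd.le_add_mul z p
  have hpx' : d p ≤ d x + dist p x := by simpa using hd.le_add_mul p x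
  have hdx : 0 < d x := pos_of_mul_pos_right (dist_nonneg.trans_lt hpx) hκ₀
  nlinarith

lemma distTube_closedBall_subset_ball (hd : LipschitzWith 1 d) (hκ₀ : 0 ≤ κ) (hκ₁ : κ < 1)
    (z : X) : distTube d κ (closedBall z (d z / 2)) ⊆ ball z (2 / (1 - κ) * d z) := by
  rintro x ⟨p, hpz, hpx⟩
  rw [mem_closedBall] at hpz
  have hxp : d x ≤ d p + dist p x := by simpa [dist_comm] using hd.le_add_mul x p
  have hpz' : d p ≤ d z + dist p z := by simpa using hd.le_add_mul p z
  have hdx : 0 < d x := pos_of_mul_pos_right (dist_nonneg.trans_lt hpx) hκ₀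
  have hxz : dist x z ≤ dist p x + dist p z := by
    simpa [dist_comm] using dist_triangle x p z
  have hκ' : 0 < 1 - κ := sub_pos.2 hκ₁
  have hscale : (1 - κ) * d x ≤ 3 / 2 * d z := by linarith
  have hdz : 0 < d z := by linarith [mul_pos hκ' hdx]
  rw [mem_ball, div_mul_eq_mul_div, lt_div_iff₀ hκ']
  calc dist x z * (1 - κ) ≤ (κ * d x + d z / 2) * (1 - κ) := by gcongr; linarith
    _ = κ * ((1 - κ) * d x) + (1 - κ) * (d z / 2) := by ring
    _ ≤ κ * (3 / 2 * d z) + (1 - κ) * (d z / 2) := by gcongr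
    _ = (κ + 1 / 2) * d z := by ring
    _ < 2 * d z := by gcongr; linarith

lemma ofReal_le_ofReal_add_edist (hd : LipschitzWith 1 d) (x y : X) :
    ENNReal.ofReal (d x) ≤ ENNReal.ofReal (d y) + edist x y := by
  have h : d x ≤ d y + dist x y := by simpa using hd.le_add_mul x y
  rw [edist_dist]
  exact (ENNReal.ofReal_le_ofReal h).trans ENNReal.ofReal_add_le

lemma exists_first_exit {g : ℝ → X} {a b r : ℝ} (hg : ContinuousOn g (Icc a b))
    (h : ∃ t ∈ Icc a b, r ≤ dist (g t) (g a)) :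
    ∃ s ∈ Icc a b, r ≤ dist (g s) (g a) ∧ ∀ t ∈ Ico a s, dist (g t) (g a) < r := by
  have hdist : ContinuousOn (fun t => dist (g t) (g a)) (Icc a b) :=
    continuous_dist.comp_continuousOn (hg.prodMk continuousOn_const)
  have hcompact : IsCompact (Icc a b ∩ (fun t => dist (g t) (g a)) ⁻¹' Ici r) :=
    isCompact_Icc.of_isClosed_subset
      (hdist.preimage_isClosed_of_isClosed isClosed_Icc isClosed_Ici) inter_subset_left
  obtain ⟨s, ⟨hs, hrs⟩, hleast⟩ := hcompact.exists_isLeast h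
  refine ⟨s, hs, hrs, fun t ht => not_le.1 fun hrt => ?_⟩
  exact ht.2.not_ge (hleast ⟨⟨ht.1, ht.2.le.trans hs.2⟩, hrt⟩)

lemma exists_measurableSet_mem_iff_mem_distTube [MeasurableSpace X] [OpensMeasurableSpace X]
    [SecondCountableTopology X] {Y ι : Type*} [MeasurableSpace Y] [TopologicalSpace ι]
    [SecondCountableTopology ι] (hd : Measurable d) (κ : ℝ) (I : Set ι) {γ : Y → ι → X}
    (hγ : ∀ t, Measurable fun y => γ y t) :
    ∃ S : Set (X × Y), MeasurableSet S ∧ ∀ y, ContinuousOn (γ y) I →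
      ∀ x, (x, y) ∈ S ↔ x ∈ distTube d κ (γ y '' I) := by
  obtain ⟨D, hDcount, hDdense⟩ := TopologicalSpace.exists_countable_dense I
  refine ⟨⋃ t ∈ D, {q | dist (γ q.2 t) q.1 < κ * d q.1}, ?_, fun y hy x => ?_⟩
  · refine MeasurableSet.biUnion hDcount fun t _ => measurableSet_lt ?_ ?_
    · exact ((hγ t).comp measurable_snd).dist measurable_fst
    · exact (hd.comp measurable_fst).const_mul κ
  · simp only [mem_iUnion, mem_ofPred_eq, distTube, exists_mem_image, exists_prop]
    refine ⟨fun ⟨t, _, ht⟩ => ⟨t, t.2, ht⟩, fun ⟨t, htI, ht⟩ => ?_⟩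
    have hopen : IsOpen {t : I | dist (γ y t) x < κ * d x} :=
      isOpen_lt (hy.domRestrict.dist continuous_const) continuous_const
    exact hDdense.exists_mem_open hopen ⟨⟨t, htI⟩, ht⟩

end DistTube

lemma lintegral_measure_section_mul {X Y : Type*} [MeasurableSpace X] [MeasurableSpace Y]
    (ν : Measure X) (μ : Measure Y) [SFinite ν] [SFinite μ] {S : Set (X × Y)}
    (hS : MeasurableSet S) {w : X → ℝ≥0∞} (hw : Measurable w) :
    ∫⁻ x, μ (Prod.mk x ⁻¹' S) * w x ∂ν = ∫⁻ y, ∫⁻ x in (·, y) ⁻¹' S, w x ∂ν ∂μ := by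
  have hmeas : Measurable (S.indicator fun q => w q.1) := (hw.comp measurable_fst).indicator hS
  calc ∫⁻ x, μ (Prod.mk x ⁻¹' S) * w x ∂ν
      = ∫⁻ x, ∫⁻ y, S.indicator (fun q => w q.1) (x, y) ∂μ ∂ν := by
        refine lintegral_congr fun x => ?_
        rw [mul_comm, ← lintegral_indicator_const (measurable_prodMk_left hS)]
        rfl
    _ = ∫⁻ y, ∫⁻ x, S.indicator (fun q => w q.1) (x, y) ∂ν ∂μ :=
        lintegral_lintegral_swap hmeas.aemeasurable
    _ = ∫⁻ y, ∫⁻ x in (·, y) ⁻¹' S, w x ∂ν ∂μ := by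
        refine lintegral_congr fun y => ?_
        rw [← lintegral_indicator (measurable_prodMk_right hS)]
        rfl

lemma ennreal_rpow_le_rpow_of_nonpos {x y : ℝ≥0∞} {p : ℝ} (hp : p ≤ 0) (hxy : x ≤ y) :
    y ^ p ≤ x ^ p := by
  rw [← neg_neg p, ENNReal.rpow_neg y, ENNReal.rpow_neg x]
  exact ENNReal.inv_le_inv.2 (ENNReal.rpow_le_rpow hxy (neg_nonneg.2 hp))

section TubeIntegral

open Module (finrank)

variable {E : Type*} [NormedAddCommGroup E] [NormedSpace ℝ E] [FiniteDimensional ℝ E]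
  [MeasurableSpace E] (ν : Measure E) [ν.IsAddHaarMeasure] {d : E → ℝ} {κ : ℝ}

/-- The constant in the bounds for integrals over `distTube d κ S`: on the tube of the ball of
radius `d z / 2` around `z` one has `d ≥ d z / 4`, and that tube lies in the ball of radius
`2 / (1 - κ) * d z`. -/
def tubeConst (κ : ℝ) : ℝ≥0∞ :=
  ENNReal.ofReal (1 / 4) ^ (1 - finrank ℝ E : ℝ) * ENNReal.ofReal (2 / (1 - κ)) ^ finrank ℝ E *
    ν (ball 0 1)

lemma tubeConst_ne_top : tubeConst ν κ ≠ ⊤ := by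
  have hquarter : ENNReal.ofReal (1 / 4) ^ (1 - finrank ℝ E : ℝ) ≠ ⊤ :=
    ENNReal.rpow_ne_top_of_ne_zero (by norm_num) ENNReal.ofReal_ne_top
  have hball : ν (ball 0 1) ≠ ⊤ := measure_ball_lt_top.ne
  rw [tubeConst]
  finiteness

variable [BorelSpace E] [Nontrivial E]

lemma setLIntegral_rpow_one_sub_finrank_le {A : Set E} {z : E} {c C r : ℝ}
    (hc : 0 ≤ c) (hC : 0 ≤ C) (hr : 0 < r) (hball : A ⊆ ball z (C * r))
    (hd : ∀ x ∈ A, c * r ≤ d x) :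
    ∫⁻ x in A, ENNReal.ofReal (d x) ^ (1 - finrank ℝ E : ℝ) ∂ν ≤
      ENNReal.ofReal c ^ (1 - finrank ℝ E : ℝ) * ENNReal.ofReal C ^ finrank ℝ E * ν (ball 0 1) *
        ENNReal.ofReal r := by
  have hexp : (1 - finrank ℝ E : ℝ) ≤ 0 :=
    sub_nonpos.2 (Nat.one_le_cast.2 Module.finrank_pos)
  have hhomog : ENNReal.ofReal r ^ (1 - finrank ℝ E : ℝ) * ENNReal.ofReal r ^ finrank ℝ E =
      ENNReal.ofReal r := by
    rw [← ENNReal.rpow_natCast, ← ENNReal.rpow_add _ _ (by simpa using hr) ENNReal.ofReal_ne_top,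
      sub_add_cancel, ENNReal.rpow_one]
  calc ∫⁻ x in A, ENNReal.ofReal (d x) ^ (1 - finrank ℝ E : ℝ) ∂ν
      ≤ ∫⁻ _ in A, ENNReal.ofReal (c * r) ^ (1 - finrank ℝ E : ℝ) ∂ν :=
        setLIntegral_mono measurable_const fun x hx =>
          ennreal_rpow_le_rpow_of_nonpos hexp (ENNReal.ofReal_le_ofReal (hd x hx))
    _ ≤ ENNReal.ofReal (c * r) ^ (1 - finrank ℝ E : ℝ) * ν (ball z (C * r)) := by
        rw [setLIntegral_const]
        gcongr
    _ = ENNReal.ofReal c ^ (1 - finrank ℝ E : ℝ) * ENNReal.ofReal C ^ finrank ℝ E *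
          ν (ball 0 1) *
          (ENNReal.ofReal r ^ (1 - finrank ℝ E : ℝ) * ENNReal.ofReal r ^ finrank ℝ E) := by
        rw [Measure.addHaar_ball ν z (by positivity), ENNReal.ofReal_pow (by positivity),
          ENNReal.ofReal_mul hc, ENNReal.ofReal_mul hC, mul_pow,
          ENNReal.mul_rpow_of_ne_top ENNReal.ofReal_ne_top ENNReal.ofReal_ne_top]
        ring
    _ = _ := by rw [hhomog]

lemma setLIntegral_distTube_closedBall_le (hd : LipschitzWith 1 d) (hκ₀ : 0 ≤ κ) (hκ₁ : κ < 1)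
    {z : E} (hz : 0 < d z) :
    ∫⁻ x in distTube d κ (closedBall z (d z / 2)),
        ENNReal.ofReal (d x) ^ (1 - finrank ℝ E : ℝ) ∂ν ≤
      tubeConst ν κ * ENNReal.ofReal (d z) :=
  setLIntegral_rpow_one_sub_finrank_le ν (by norm_num) (div_nonneg zero_le_two (sub_pos.2 hκ₁).le)
    hz (distTube_closedBall_subset_ball hd hκ₀ hκ₁ z)
    fun _ hx => quarter_le_of_mem_distTube_closedBall hd hκ₀ hκ₁ hx

lemma setLIntegral_distTube_image_Icc_le_of_forall_dist_le (hd : LipschitzWith 1 d) (hκ₀ : 0 ≤ κ)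
    (hκ₁ : κ < 1) {g : ℝ → E} {a b : ℝ} (hab : a ≤ b) (hda : 0 < d (g a))
    (hstay : ∀ t ∈ Icc a b, dist (g t) (g a) ≤ d (g a) / 2) :
    ∫⁻ x in distTube d κ (g '' Icc a b), ENNReal.ofReal (d x) ^ (1 - finrank ℝ E : ℝ) ∂ν ≤
      tubeConst ν κ * (2 * eVariationOn g (Icc a b) + ENNReal.ofReal (d (g b))) := by
  have himage : g '' Icc a b ⊆ closedBall (g a) (d (g a) / 2) :=
    image_subset_iff.2 hstay
  have hlength : edist (g a) (g b) ≤ eVariationOn g (Icc a b) :=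
    eVariationOn.edist_le g (left_mem_Icc.2 hab) (right_mem_Icc.2 hab)
  calc _ ≤ tubeConst ν κ * ENNReal.ofReal (d (g a)) :=
        (lintegral_mono_set (distTube_mono himage)).trans
          (setLIntegral_distTube_closedBall_le ν hd hκ₀ hκ₁ hda)
    _ ≤ tubeConst ν κ * (ENNReal.ofReal (d (g b)) + 2 * eVariationOn g (Icc a b)) := by
        gcongr
        refine (ofReal_le_ofReal_add_edist hd (g a) (g b)).trans ?_
        gcongr
        exact hlength.trans (le_mul_of_one_le_left' one_le_two)
    _ = _ := by rw [add_comm]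

lemma setLIntegral_distTube_image_Icc_le_add (hd : LipschitzWith 1 d) (hκ₀ : 0 ≤ κ)
    (hκ₁ : κ < 1) {g : ℝ → E} {a b s : ℝ} (hs : s ∈ Icc a b) (hda : 0 < d (g a))
    (hexit : d (g a) / 2 ≤ dist (g s) (g a))
    (hstay : ∀ t ∈ Ico a s, dist (g t) (g a) ≤ d (g a) / 2) :
    ∫⁻ x in distTube d κ (g '' Icc a b), ENNReal.ofReal (d x) ^ (1 - finrank ℝ E : ℝ) ∂ν ≤
      tubeConst ν κ * (2 * eVariationOn g (Icc a s)) +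
        ∫⁻ x in distTube d κ (g '' Icc s b), ENNReal.ofReal (d x) ^ (1 - finrank ℝ E : ℝ) ∂ν := by
  have himage : g '' Ico a s ⊆ closedBall (g a) (d (g a) / 2) :=
    image_subset_iff.2 hstay
  have hlength : ENNReal.ofReal (d (g a)) ≤ 2 * eVariationOn g (Icc a s) :=
    calc ENNReal.ofReal (d (g a)) ≤ ENNReal.ofReal (2 * dist (g s) (g a)) :=
          ENNReal.ofReal_le_ofReal (by linarith)
      _ = 2 * edist (g s) (g a) := by
          rw [ENNReal.ofReal_mul zero_le_two, ENNReal.ofReal_ofNat, edist_dist]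
      _ ≤ 2 * eVariationOn g (Icc a s) := by
          gcongr
          exact eVariationOn.edist_le g (right_mem_Icc.2 hs.1) (left_mem_Icc.2 hs.1)
  rw [← Ico_union_Icc_eq_Icc hs.1 hs.2, image_union, distTube_union]
  refine (lintegral_union_le _ _ _).trans (add_le_add_left ?_ _)
  calc _ ≤ tubeConst ν κ * ENNReal.ofReal (d (g a)) :=
        (lintegral_mono_set (distTube_mono himage)).trans
          (setLIntegral_distTube_closedBall_le ν hd hκ₀ hκ₁ hda)
    _ ≤ _ := by gcongr

lemma setLIntegral_distTube_image_Icc_le_of_eVariationOn_lt (hd : LipschitzWith 1 d)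
    (hκ₀ : 0 ≤ κ) (hκ₁ : κ < 1) {g : ℝ → E} {b δ : ℝ} (hδ : 0 < δ) (k : ℕ) {a : ℝ} (hab : a ≤ b)
    (hg : ContinuousOn g (Icc a b)) (hdg : ∀ t ∈ Icc a b, δ ≤ d (g t))
    (hk : eVariationOn g (Icc a b) < k * ENNReal.ofReal (δ / 2)) :
    ∫⁻ x in distTube d κ (g '' Icc a b), ENNReal.ofReal (d x) ^ (1 - finrank ℝ E : ℝ) ∂ν ≤
      tubeConst ν κ * (2 * eVariationOn g (Icc a b) + ENNReal.ofReal (d (g b))) := by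
  induction k generalizing a with
  | zero => simp at hk
  | succ k ih =>
    have hδa : δ ≤ d (g a) := hdg a (left_mem_Icc.2 hab)
    by_cases hleave : ∃ t ∈ Icc a b, d (g a) / 2 ≤ dist (g t) (g a)
    · obtain ⟨s, hs, hexit, hstay⟩ := exists_first_exit hg hleave
      have hsub : Icc s b ⊆ Icc a b := Icc_subset_Icc_left hs.1
      have hsplit : eVariationOn g (Icc a s) + eVariationOn g (Icc s b) =
          eVariationOn g (Icc a b) := by
        simpa using eVariationOn.Icc_add_Icc g hs.1 hs.2 (mem_univ s)
      have hfirst : ENNReal.ofReal (δ / 2) ≤ eVariationOn g (Icc a s) :=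
        calc ENNReal.ofReal (δ / 2) ≤ edist (g s) (g a) := by
              rw [edist_dist]
              exact ENNReal.ofReal_le_ofReal (by linarith)
          _ ≤ _ := eVariationOn.edist_le g (right_mem_Icc.2 hs.1) (left_mem_Icc.2 hs.1)
      have hrest : eVariationOn g (Icc s b) < k * ENNReal.ofReal (δ / 2) := by
        rw [← hsplit, Nat.cast_succ, add_one_mul, add_comm] at hk
        exact lt_of_add_lt_add_right ((add_le_add_right hfirst _).trans_lt hk)
      calc _ ≤ _ := setLIntegral_distTube_image_Icc_le_add ν hd hκ₀ hκ₁ hs (hδ.trans_le hδa)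
            hexit fun t ht => (hstay t ht).le
        _ ≤ tubeConst ν κ * (2 * eVariationOn g (Icc a s)) +
            tubeConst ν κ * (2 * eVariationOn g (Icc s b) + ENNReal.ofReal (d (g b))) := by
          gcongr
          exact ih hs.2 (hg.mono hsub) (fun t ht => hdg t (hsub ht)) hrest
        _ = _ := by
          rw [← hsplit]
          ring
    · push Not at hleave
      exact setLIntegral_distTube_image_Icc_le_of_forall_dist_le ν hd hκ₀ hκ₁ hab
        (hδ.trans_le hδa) fun t ht => (hleave t ht).le

lemma setLIntegral_distTube_image_Icc_le (hd : LipschitzWith 1 d) (hκ₀ : 0 ≤ κ) (hκ₁ : κ < 1)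
    {g : ℝ → E} {a b : ℝ} (hab : a ≤ b) (hg : ContinuousOn g (Icc a b))
    (hdg : ∀ t ∈ Icc a b, 0 < d (g t)) (hlength : eVariationOn g (Icc a b) ≠ ⊤) :
    ∫⁻ x in distTube d κ (g '' Icc a b), ENNReal.ofReal (d x) ^ (1 - finrank ℝ E : ℝ) ∂ν ≤
      tubeConst ν κ * (2 * eVariationOn g (Icc a b) + ENNReal.ofReal (d (g b))) := by
  obtain ⟨t₀, ht₀, hmin⟩ := isCompact_Icc.exists_isMinOn (nonempty_Icc.2 hab)
    (hd.continuous.comp_continuousOn hg)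
  have hδ : 0 < d (g t₀) := hdg t₀ ht₀
  obtain ⟨k, hk⟩ := ENNReal.exists_nat_mul_gt (a := ENNReal.ofReal (d (g t₀) / 2))
    (by simpa using hδ) hlength
  exact setLIntegral_distTube_image_Icc_le_of_eVariationOn_lt ν hd hκ₀ hκ₁ hδ k hab hg
    (fun t ht => hmin ht) hk

theorem lintegral_measure_mem_distTube_mul_le {Y : Type*} [MeasurableSpace Y] (μ : Measure Y)
    [SFinite μ] (hd : LipschitzWith 1 d) (hκ₀ : 0 ≤ κ) (hκ₁ : κ < 1) {a b : ℝ} (hab : a ≤ b)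
    {γ : Y → ℝ → E} (hγ : ∀ t, Measurable fun y => γ y t) {B : Set Y} (hB : MeasurableSet B)
    (hcont : ∀ y ∈ B, ContinuousOn (γ y) (Icc a b))
    (hpos : ∀ y ∈ B, ∀ t ∈ Icc a b, 0 < d (γ y t))
    (hlength : ∀ y ∈ B, eVariationOn (γ y) (Icc a b) ≠ ⊤) :
    ∫⁻ x, μ {y ∈ B | x ∈ distTube d κ (γ y '' Icc a b)} *
        ENNReal.ofReal (d x) ^ (1 - finrank ℝ E : ℝ) ∂ν ≤
      ∫⁻ y in B, tubeConst ν κ *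
        (2 * eVariationOn (γ y) (Icc a b) + ENNReal.ofReal (d (γ y b))) ∂μ := by
  obtain ⟨S, hS, hmem⟩ :=
    exists_measurableSet_mem_iff_mem_distTube hd.continuous.measurable κ (Icc a b) hγ
  have hsection (x : E) : μ {y ∈ B | x ∈ distTube d κ (γ y '' Icc a b)} =
      μ.restrict B (Prod.mk x ⁻¹' S) := by
    rw [Measure.restrict_apply (measurable_prodMk_left hS)]
    congr 1
    ext y
    simp only [mem_ofPred_eq, mem_inter_iff, mem_preimage, and_comm (a := (x, y) ∈ S)]
    exact and_congr_right fun hy => (hmem y (hcont y hy) x).symm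
  simp only [hsection]
  rw [lintegral_measure_section_mul ν _ hS
    (hd.continuous.measurable.ennreal_ofReal.pow_const _)]
  refine setLIntegral_mono' hB fun y hy => ?_
  have hslice : (·, y) ⁻¹' S = distTube d κ (γ y '' Icc a b) := ext (hmem y (hcont y hy))
  rw [hslice]
  exact setLIntegral_distTube_image_Icc_le ν hd hκ₀ hκ₁ hab (hcont y hy) (hpos y hy) (hlength y hy)

end TubeIntegral

lemma hatSet_eq_interior {n : ℕ} {Ot : Set (En n)} (hOt : Otᶜ.Nonempty) :
    hatSet Ot = interior Ot := by
  ext x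
  simp only [hatSet, mem_ofPred_eq, ← infDist_pos_iff_notMem_closure hOt, closure_compl,
    notMem_compl_iff]
  exact and_iff_right_of_imp fun hx => interior_subset hx

lemma nonempty_compl_of_infDist_compl_hatSet_pos {n : ℕ} {Ot : Set (En n)} {x : En n}
    (hx : 0 < infDist x (hatSet Ot)ᶜ) : Otᶜ.Nonempty := by
  have hxmem : x ∈ hatSet Ot :=
    of_not_not fun hxc => hx.ne' (infDist_zero_of_mem hxc)
  by_contra hempty
  exact hxmem.2.ne' (by rw [not_nonempty_iff_eq_empty.1 hempty, infDist_empty])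

lemma omegaFn_le_measure_mem_distTube {n : ℕ} (μ0 : Measure (En n)) (Ω U : Set (En n))
    (γ : En n → ℝ → En n) {κ : ℝ} (hκ : 1 / 2 < κ) {x : En n} (hx : 0 < infDist x Uᶜ) :
    omegaFn μ0 Ω U γ x ≤
      μ0 {y ∈ Ω | x ∈ distTube (infDist · Uᶜ) κ (γ y '' Icc 0 1)} := by
  refine measure_mono ?_
  rintro y ⟨hy, t, ht, htx⟩
  exact ⟨hy, γ y t, mem_image_of_mem _ ht, htx.trans_lt (by nlinarith)⟩

theorem stmt_6_general (n : ℕ) (hn : 1 ≤ n) {Ω U : Set (En n)} (hΩ : MeasurableSet Ω)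
    (hU : IsOpen U) (hUne : Uᶜ.Nonempty) (hΩU : Ω ⊆ U) {x0 : En n} (P : PathSystem Ω U x0)
    (μ0 : Measure (En n)) [SFinite μ0] (hμ0 : μ0 Ω ≠ ⊤)
    (hgeo : ∫⁻ x in Ω, geoDist U x0 x ∂μ0 ≠ ⊤) :
    ∫⁻ x in Ω, omegaFn μ0 Ω U P.γ x * ENNReal.ofReal (infDist x Uᶜ) ^ ((1 : ℝ) - n) < ⊤ := by
  have : Nonempty (Fin n) := Fin.pos_iff_nonempty.1 hn
  have hpos {x : En n} (hx : x ∈ U) : 0 < infDist x Uᶜ :=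
    (hU.isClosed_compl.notMem_iff_infDist_pos hUne).1 (notMem_compl_iff.2 hx)
  have hmeas (t : ℝ) : Measurable fun y => P.γ y t := P.meas.comp measurable_prodMk_left
  have htonelli := lintegral_measure_mem_distTube_mul_le volume μ0 (κ := 2 / 3)
    (lipschitz_infDist_pt Uᶜ) (by norm_num) (by norm_num) zero_le_one hmeas hΩ
    (fun y hy => P.contOn y (hΩU hy)) (fun y hy t ht => hpos (P.mapsTo y (hΩU hy) t ht))
    (fun y hy => (P.rectifiable y (hΩU hy)).ne)
  rw [finrank_euclideanSpace_fin] at htonelli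
  set c := tubeConst (volume : Measure (En n)) (2 / 3)
  have hc : c ≠ ⊤ := tubeConst_ne_top volume
  calc _ ≤ ∫⁻ x in Ω, μ0 {y ∈ Ω | x ∈ distTube (infDist · Uᶜ) (2 / 3) (P.γ y '' Icc 0 1)} *
          ENNReal.ofReal (infDist x Uᶜ) ^ ((1 : ℝ) - n) :=
        setLIntegral_mono' hΩ fun x hx => mul_le_mul_left
          (omegaFn_le_measure_mem_distTube μ0 Ω U P.γ (by norm_num) (hpos (hΩU hx))) _
    _ ≤ _ := (setLIntegral_le_lintegral _ _).trans htonelli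
    _ ≤ ∫⁻ y in Ω, (c * (2 * ENNReal.ofReal P.C) * geoDist U x0 y +
          c * ENNReal.ofReal (infDist x0 Uᶜ)) ∂μ0 := by
        refine setLIntegral_mono' hΩ fun y hy => ?_
        rw [P.ends y (hΩU hy), mul_add, mul_assoc, mul_assoc]
        gcongr
        exact P.total_len y (hΩU hy)
    _ = c * (2 * ENNReal.ofReal P.C) * ∫⁻ y in Ω, geoDist U x0 y ∂μ0 +
          c * ENNReal.ofReal (infDist x0 Uᶜ) * μ0 Ω := by
        rw [lintegral_add_right _ measurable_const, lintegral_const_mul' _ _ (by finiteness),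
          setLIntegral_const]
    _ < ⊤ := by finiteness

/-- (Lemma 2.3.) Under the normalization `B̄(x0,1) ⊆ Ω`, `d̂(x0) ≥ 15`,
given a path system and a nontrivial finite positive Radon measure `μ0` on `Ω` with
`d_Ω̂ ∈ L¹(μ0)`, one has `∫_Ω ω(x) d̂(x)^{1−n} dx < ∞`. -/
theorem stmt_6 (n : ℕ) (hn : 1 ≤ n) (Ω Ot : Set (En n))
    (hΩopen : IsOpen Ω) (hΩconn : IsConnected Ω) (hΩbdd : Bornology.IsBounded Ω)
    (hcov : Ω ⊆ Ot) (hcovnull : volume (Ot \ Ω) = 0)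
    (x0 : En n) (hx0 : x0 ∈ Ω)
    (hnorm1 : Metric.closedBall x0 1 ⊆ Ω)
    (hnorm2 : 15 ≤ Metric.infDist x0 (hatSet Ot)ᶜ)
    (P : PathSystem Ω (hatSet Ot) x0)
    (μ0 : Measure (En n)) [IsFiniteMeasure μ0] (hμ0ne : μ0 ≠ 0) (hμ0supp : μ0 Ωᶜ = 0)
    (hgeo : (∫⁻ x in Ω, geoDist (hatSet Ot) x0 x ∂μ0) < ⊤) :
    (∫⁻ x in Ω, omegaFn μ0 Ω (hatSet Ot) P.γ x *
      (ENNReal.ofReal (Metric.infDist x (hatSet Ot)ᶜ)) ^ ((1:ℝ) - n)) < ⊤ := by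
  have hOt : Otᶜ.Nonempty := nonempty_compl_of_infDist_compl_hatSet_pos (by linarith)
  have hhat : hatSet Ot = interior Ot := hatSet_eq_interior hOt
  exact stmt_6_general n hn (U := hatSet Ot) hΩopen.measurableSet (hhat ▸ isOpen_interior)
    (hOt.mono (compl_subset_compl.2 (sep_subset _ _))) (hhat ▸ interior_maximal hcov hΩopen) P μ0
    (measure_ne_top μ0 Ω) hgeo.ne
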